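/- Let K be a simplicial complex with finitely many faces in a finite-dimensional real normed vector space E, give |K| ⊆ E the subspace topology, let x ∈ |K|, and let σ be the (unique) face of K whose combinatorial interior contains x. Then |K| ∖ st̊(σ) is a strong deformation retract of |K| ∖ {x}: there exist a continuous map r : |K| ∖ {x} → |K| ∖ st̊(σ) with r(y) = y for all y ∈ |K| ∖ st̊(σ), and a continuous homotopy H : (|K| ∖ {x}) × [0,1] → |K| ∖ {x} with H(y,0) = y and H(y,1) = r(y) for all y, and H(y,t) = y for all t whenever y ∈ |K| ∖ st̊(σ). -/

import Mathlib

variable {E : Type*} [NormedAddCommGroup E] [NormedSpace ℝ E] [FiniteDimensional ℝ E]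

/-- The combinatorial interior of a finite set `s`: the convex hull of `s` minus the
convex hulls of all nonempty proper subsets of `s`. -/
def combInterior (s : Finset E) : Set E :=
  convexHull ℝ (s : Set E) \
    ⋃ (t : Finset E) (_ : t ⊂ s) (_ : t.Nonempty), convexHull ℝ (t : Set E)

/-- The open star of a face `τ` of a simplicial complex `K`: the union of the
combinatorial interiors of all faces of `K` containing `τ`. -/
def openStar (K : Geometry.SimplicialComplex ℝ E) (τ : Finset E) : Set E :=
  ⋃ (s : Finset E) (_ : s ∈ K.faces) (_ : τ ⊆ s), combInterior s

open Finset in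
/-- Continuous barycentric coordinates of an affinely independent finite set. -/
lemma exists_coord (s : Finset E) (hs : AffineIndependent ℝ ((↑) : s → E)) :
    ∃ c : E → E → ℝ, (∀ v, Continuous (c v)) ∧
      ∀ w : E → ℝ, ∑ u ∈ s, w u = 1 → ∀ v ∈ s, c v (∑ u ∈ s, w u • u) = w v := by
  classical
  obtain ⟨t, hst, hti, htop⟩ := exists_subset_affineIndependent_affineSpan_eq_top
    (k := ℝ) (s := (s : Set E)) hs
  let b : AffineBasis t ℝ E := ⟨((↑) : t → E), hti, by simpa using htop⟩
  refine ⟨fun v y => if h : v ∈ t then b.coord ⟨v, h⟩ y else 0, fun v => ?_, ?_⟩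
  · by_cases h : v ∈ t
    · simp only [h, dite_true]
      exact (b.coord ⟨v, h⟩).continuous_of_finiteDimensional
    · simp only [h, dite_false]; exact continuous_const
  · intro w hw v hv
    have hvt : v ∈ t := hst hv
    simp only [hvt, dite_true]
    set f := b.coord ⟨v, hvt⟩ with hf
    have hfu : ∀ u ∈ s, f u = if u = v then 1 else 0 := by
      intro u hu
      have : u = b ⟨u, hst hu⟩ := rfl
      rw [this, hf, b.coord_apply]
      simp only [Subtype.mk.injEq, ← this, eq_comm]
    have hlin : ∀ y, f y = f.linear y + f 0 := fun y => by
      have := f.decomp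
      exact congrFun this y
    calc f (∑ u ∈ s, w u • u) = ∑ u ∈ s, w u * f.linear u + (∑ u ∈ s, w u) * f 0 := by
          rw [hlin, hw, map_sum]; simp
      _ = ∑ u ∈ s, w u * f u := by
          rw [sum_mul, ← sum_add_distrib]
          exact sum_congr rfl fun u _ => by rw [hlin u]; ring
      _ = w v := by
          rw [sum_congr rfl fun u hu => by rw [hfu u hu]]
          simp [hv]

/-- Global barycentric coordinates on a simplicial complex. -/
lemma exists_bary (K : Geometry.SimplicialComplex ℝ E) :
    ∃ l : E → E → ℝ, ∀ s ∈ K.faces, ∀ w : E → ℝ, (∀ v ∈ s, 0 ≤ w v) → (∀ v, v ∉ s → w v = 0) →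
      ∑ u ∈ s, w u = 1 → l (∑ u ∈ s, w u • u) = w := by
  classical
  let P : E → (E → ℝ) → Prop := fun y w => ∃ s ∈ K.faces, (∀ v ∈ s, 0 ≤ w v) ∧
    (∀ v, v ∉ s → w v = 0) ∧ ∑ u ∈ s, w u = 1 ∧ ∑ u ∈ s, w u • u = y
  have ext : ∀ s t : Finset E, t ⊆ s → s ∈ K.faces → ∀ w u : E → ℝ, (∀ v, v ∉ s → w v = 0) →
      (∀ v, v ∉ t → u v = 0) → ∑ v ∈ s, w v = 1 → ∑ v ∈ t, u v = 1 →
      ∑ v ∈ s, w v • v = ∑ v ∈ t, u v • v → w = u := by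
    intro s t hts hs w u hw hu hw1 hu1 h
    obtain ⟨c, -, hc⟩ := exists_coord s (K.indep hs)
    have e1 : ∑ v ∈ s, u v = 1 := by
      rw [← hu1]; symm
      exact Finset.sum_subset hts fun v _ hv => hu v hv
    have e2 : ∑ v ∈ s, u v • v = ∑ v ∈ t, u v • v := by
      symm
      exact Finset.sum_subset hts fun v _ hv => by rw [hu v hv, zero_smul]
    funext v
    by_cases hv : v ∈ s
    · rw [← hc w hw1 v hv, h, ← e2, hc u e1 v hv]
    · rw [hw v hv, hu v (fun h => hv (hts h))]
  have uniq : ∀ y w w', P y w → P y w' → w = w' := by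
    rintro y w w' ⟨s, hs, hw0, hws, hw1, hwy⟩ ⟨s', hs', hw0', hws', hw1', hwy'⟩
    have hy : y ∈ convexHull ℝ (s : Set E) := Finset.mem_convexHull'.2 ⟨w, hw0, hw1, hwy⟩
    have hy' : y ∈ convexHull ℝ (s' : Set E) := Finset.mem_convexHull'.2 ⟨w', hw0', hw1', hwy'⟩
    have := K.inter_subset_convexHull hs hs' ⟨hy, hy'⟩
    rw [← Finset.coe_inter, Finset.mem_convexHull'] at this
    obtain ⟨u, hu0, hu1, huy⟩ := this
    let u' : E → ℝ := fun v => if v ∈ s ∩ s' then u v else 0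
    have h0 : ∀ v, v ∉ s ∩ s' → u' v = 0 := fun v hv => if_neg hv
    have h1 : ∑ v ∈ s ∩ s', u' v = 1 := by
      rw [← hu1]; exact Finset.sum_congr rfl fun v hv => if_pos hv
    have hy2 : ∑ v ∈ s ∩ s', u' v • v = y := by
      rw [← huy]; exact Finset.sum_congr rfl fun v hv => by simp only [u', if_pos hv]
    rw [ext s _ Finset.inter_subset_left hs w u' hws h0 hw1 h1 (hwy.trans hy2.symm),
      ext s' _ Finset.inter_subset_right hs' w' u' hws' h0 hw1' h1 (hwy'.trans hy2.symm)]
  refine ⟨fun y => if h : ∃ w, P y w then h.choose else 0, ?_⟩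
  intro s hs w hw0 hws hw1
  have h : ∃ w', P (∑ u ∈ s, w u • u) w' := ⟨w, s, hs, hw0, hws, hw1, rfl⟩
  simp only [h, dite_true]
  exact uniq _ _ _ h.choose_spec ⟨s, hs, hw0, hws, hw1, rfl⟩

lemma bary_spec (K : Geometry.SimplicialComplex ℝ E) (l : E → E → ℝ)
    (hl : ∀ s ∈ K.faces, ∀ w : E → ℝ, (∀ v ∈ s, 0 ≤ w v) → (∀ v, v ∉ s → w v = 0) →
      ∑ u ∈ s, w u = 1 → l (∑ u ∈ s, w u • u) = w)
    (s : Finset E) (hs : s ∈ K.faces) (y : E) (hy : y ∈ convexHull ℝ (s : Set E)) :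
    (∀ v, 0 ≤ l y v) ∧ (∀ v, v ∉ s → l y v = 0) ∧ ∑ u ∈ s, l y u = 1 ∧
      ∑ u ∈ s, l y u • u = y := by
  classical
  obtain ⟨u, hu0, hu1, huy⟩ := Finset.mem_convexHull'.1 hy
  let u' : E → ℝ := fun v => if v ∈ s then u v else 0
  have h0 : ∀ v, v ∉ s → u' v = 0 := fun v hv => if_neg hv
  have h1 : ∑ v ∈ s, u' v = 1 := by
    rw [← hu1]; exact Finset.sum_congr rfl fun v hv => if_pos hv
  have hy2 : ∑ v ∈ s, u' v • v = y := by
    rw [← huy]; exact Finset.sum_congr rfl fun v hv => by simp only [u', if_pos hv]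
  have hp : ∀ v, 0 ≤ u' v := fun v => by
    by_cases hv : v ∈ s
    · simpa only [u', if_pos hv] using hu0 v hv
    · rw [h0 v hv]
  have := hl s hs u' (fun v _ => hp v) h0 h1
  rw [hy2] at this
  rw [this]
  exact ⟨hp, h0, h1, hy2⟩

lemma bary_continuousOn (K : Geometry.SimplicialComplex ℝ E) (hfin : K.faces.Finite)
    (l : E → E → ℝ)
    (hl : ∀ s ∈ K.faces, ∀ w : E → ℝ, (∀ v ∈ s, 0 ≤ w v) → (∀ v, v ∉ s → w v = 0) →
      ∑ u ∈ s, w u = 1 → l (∑ u ∈ s, w u • u) = w) (v : E) :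
    ContinuousOn (fun y => l y v) K.space := by
  have : K.space = ⋃ s : K.faces, convexHull ℝ ((s : Finset E) : Set E) := by
    ext y; simp [Geometry.SimplicialComplex.space]
  rw [this]
  have : Finite K.faces := hfin
  refine (locallyFinite_of_finite _).continuousOn_iUnion
    (fun s => s.1.finite_toSet.isClosed_convexHull ℝ) ?_
  rintro ⟨s, hs⟩
  obtain ⟨c, hcc, hc⟩ := exists_coord s (K.indep hs)
  by_cases hv : v ∈ s
  · refine (hcc v).continuousOn.congr fun y hy => ?_
    obtain ⟨-, -, h1, h2⟩ := bary_spec K l hl s hs y hy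
    have := hc _ h1 v hv
    rw [h2] at this
    exact this.symm
  · exact (continuousOn_const (c := (0 : ℝ))).congr fun y hy =>
      (bary_spec K l hl s hs y hy).2.1 v hv

/-- Coordinates of a point of the combinatorial interior of a face are positive. -/
lemma bary_pos (K : Geometry.SimplicialComplex ℝ E) (l : E → E → ℝ)
    (hl : ∀ s ∈ K.faces, ∀ w : E → ℝ, (∀ v ∈ s, 0 ≤ w v) → (∀ v, v ∉ s → w v = 0) →
      ∑ u ∈ s, w u = 1 → l (∑ u ∈ s, w u • u) = w)
    (s : Finset E) (hs : s ∈ K.faces) (y : E) (hy : y ∈ combInterior s) (v : E) (hv : v ∈ s) :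
    0 < l y v := by
  classical
  obtain ⟨h0, hz, h1, h2⟩ := bary_spec K l hl s hs y hy.1
  refine lt_of_le_of_ne (h0 v) fun h => hy.2 ?_
  have hmem : y ∈ convexHull ℝ ((s.erase v : Finset E) : Set E) := by
    refine Finset.mem_convexHull'.2 ⟨l y, fun u _ => h0 u, ?_, ?_⟩
    · rw [← h1]; exact Finset.sum_erase _ h.symm
    · conv_rhs => rw [← h2]
      exact Finset.sum_erase _ (by rw [← h, zero_smul])
  have hne : (s.erase v).Nonempty := by
    have := convexHull_nonempty_iff.1 ⟨y, hmem⟩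
    exact_mod_cast this
  simp only [Set.mem_iUnion]
  exact ⟨s.erase v, Finset.erase_ssubset hv, hne, hmem⟩

lemma mem_openStar_of_pos (K : Geometry.SimplicialComplex ℝ E) (l : E → E → ℝ)
    (hl : ∀ s ∈ K.faces, ∀ w : E → ℝ, (∀ v ∈ s, 0 ≤ w v) → (∀ v, v ∉ s → w v = 0) →
      ∑ u ∈ s, w u = 1 → l (∑ u ∈ s, w u • u) = w)
    (σ : Finset E) (y : E) (hy : y ∈ K.space) (hpos : ∀ v ∈ σ, 0 < l y v) :
    y ∈ openStar K σ := by
  classical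
  obtain ⟨s, hs, hys⟩ := Geometry.SimplicialComplex.mem_space_iff.1 hy
  obtain ⟨h0, hz, h1, h2⟩ := bary_spec K l hl s hs y hys
  let s' := s.filter (fun v => l y v ≠ 0)
  have hss : s' ⊆ s := Finset.filter_subset _ _
  have hmem : y ∈ convexHull ℝ (s' : Set E) := by
    refine Finset.mem_convexHull'.2 ⟨l y, fun u _ => h0 u, ?_, ?_⟩
    · rw [← h1]; exact Finset.sum_subset hss fun v hv hv' => by
        by_contra hh; exact hv' (Finset.mem_filter.2 ⟨hv, hh⟩)
    · conv_rhs => rw [← h2]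
      exact Finset.sum_subset hss fun v hv hv' => by
        by_contra hh
        exact hv' (Finset.mem_filter.2 ⟨hv, fun h3 => hh (by rw [h3, zero_smul])⟩)
  have hne : s'.Nonempty := by
    have := convexHull_nonempty_iff.1 ⟨y, hmem⟩
    exact_mod_cast this
  have hs' : s' ∈ K.faces := K.down_closed hs hss hne
  simp only [openStar, Set.mem_iUnion]
  refine ⟨s', hs', fun v hv => Finset.mem_filter.2 ⟨?_, (hpos v hv).ne'⟩, hmem, ?_⟩
  · by_contra hh
    exact (hpos v hv).ne' (hz v hh)
  · simp only [Set.mem_iUnion]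
    rintro ⟨t, hts, htne, hyt⟩
    obtain ⟨v, hv, hvt⟩ := Finset.exists_of_ssubset hts
    exact (Finset.mem_filter.1 hv).2
      ((bary_spec K l hl t (K.down_closed hs' hts.1 htne) y hyt).2.1 v hvt)

/-- The radial push away from `x`. -/
noncomputable def pushAway (x y : E) (c : ℝ) : E := (1 - c)⁻¹ • (y - c • x)

theorem space_diff_openStar_deformationRetract
    (K : Geometry.SimplicialComplex ℝ E) (hfin : K.faces.Finite)
    (x : E) (hx : x ∈ K.space) (σ : Finset E) (hσ : σ ∈ K.faces)
    (hxσ : x ∈ combInterior σ) :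
    ∃ (r : C(↥(K.space \ {x}), ↥(K.space \ openStar K σ)))
      (H : C(↥(K.space \ {x}) × unitInterval, ↥(K.space \ {x}))),
      (∀ y : ↥(K.space \ {x}), (y : E) ∈ K.space \ openStar K σ → ((r y : E) = (y : E))) ∧
      (∀ y : ↥(K.space \ {x}), H (y, 0) = y) ∧
      (∀ y : ↥(K.space \ {x}), ((H (y, 1) : E) = (r y : E))) ∧
      (∀ y : ↥(K.space \ {x}), (y : E) ∈ K.space \ openStar K σ →
        ∀ t : unitInterval, H (y, t) = y) := by
  classical
  obtain ⟨l, hl⟩ := exists_bary K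
  have hσne : σ.Nonempty := K.nonempty_of_mem_faces hσ
  have hxpos : ∀ v ∈ σ, 0 < l x v := bary_pos K l hl σ hσ x hxσ
  have hxz : ∀ v, v ∉ σ → l x v = 0 := (bary_spec K l hl σ hσ x hxσ.1).2.1
  let m : E → ℝ := fun y => σ.inf' hσne fun v => l y v / l x v
  have hmc : ContinuousOn m K.space :=
    ContinuousOn.finset_inf'_apply hσne fun v _ =>
      (bary_continuousOn K hfin l hl v).div_const _
  have hl0 : ∀ y ∈ K.space, ∀ v, 0 ≤ l y v := by
    intro y hy
    obtain ⟨s, hs, hys⟩ := Geometry.SimplicialComplex.mem_space_iff.1 hy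
    exact (bary_spec K l hl s hs y hys).1
  have hm0 : ∀ y ∈ K.space, 0 ≤ m y := fun y hy =>
    Finset.le_inf' _ _ fun v hv => div_nonneg (hl0 y hy v) (hxpos v hv).le
  have hmle : ∀ y, ∀ v ∈ σ, m y * l x v ≤ l y v := fun y v hv =>
    (le_div_iff₀ (hxpos v hv)).1 (Finset.inf'_le (fun v => l y v / l x v) hv)
  have hmle' : ∀ y ∈ K.space, ∀ v, m y * l x v ≤ l y v := by
    intro y hy v
    by_cases hv : v ∈ σ
    · exact hmle y v hv
    · rw [hxz v hv, mul_zero]; exact hl0 y hy v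
  have hmatt : ∀ y, ∃ v ∈ σ, l y v = m y * l x v := by
    intro y
    obtain ⟨v, hv, h⟩ := Finset.exists_mem_eq_inf' hσne fun v => l y v / l x v
    refine ⟨v, hv, ?_⟩
    have : m y = l y v / l x v := h
    rw [this, div_mul_cancel₀ _ (hxpos v hv).ne']
  have hface : ∀ y ∈ K.space, 0 < m y → ∀ s ∈ K.faces, y ∈ convexHull ℝ (s : Set E) → σ ⊆ s := by
    intro y hy hm s hs hys v hv
    by_contra hvs
    have h1 := (bary_spec K l hl s hs y hys).2.1 v hvs
    have := hmle y v hv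
    rw [h1] at this
    exact absurd this (not_le.2 (mul_pos hm (hxpos v hv)))
  have hm1 : ∀ y ∈ K.space \ {x}, m y < 1 := by
    rintro y ⟨hy, hyx⟩
    by_contra! h
    obtain ⟨s, hs, hys⟩ := Geometry.SimplicialComplex.mem_space_iff.1 hy
    have hσs := hface y hy (by linarith) s hs hys
    obtain ⟨a0, az, a1, a2⟩ := bary_spec K l hl s hs y hys
    obtain ⟨b0, bz, b1, b2⟩ := bary_spec K l hl s hs x (convexHull_mono (by exact_mod_cast hσs) hxσ.1)
    have hle : ∀ v ∈ s, l x v ≤ l y v := fun v _ => by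
      have := hmle' y hy v
      nlinarith [b0 v]
    have heq := (Finset.sum_eq_sum_iff_of_le hle).1 (b1.trans a1.symm)
    apply hyx
    rw [Set.mem_singleton_iff, ← a2, ← b2]
    exact Finset.sum_congr rfl fun v hv => by rw [heq v hv]
  have hmstar : ∀ y ∈ K.space \ openStar K σ, m y = 0 := by
    rintro y ⟨hy, hns⟩
    refine le_antisymm ?_ (hm0 y hy)
    by_contra! h
    exact hns (mem_openStar_of_pos K l hl σ y hy fun v hv =>
      (mul_pos h (hxpos v hv)).trans_le (hmle y v hv))
  have key : ∀ y ∈ K.space \ {x}, ∀ c, 0 ≤ c → c ≤ m y → pushAway x y c ∈ K.space \ {x} ∧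
      ∀ v, l (pushAway x y c) v = (1 - c)⁻¹ * (l y v - c * l x v) := by
    intro y hy c hc0 hcm
    have hc1 : 0 < 1 - c := by linarith [hm1 y hy]
    have hne : pushAway x y c ≠ x := by
      intro h
      apply hy.2
      unfold pushAway at h
      rw [inv_smul_eq_iff₀ hc1.ne', sub_smul, one_smul] at h
      exact sub_left_injective h
    rcases (hm0 y hy.1).eq_or_lt with h0 | h0
    · obtain rfl : c = 0 := le_antisymm (h0 ▸ hcm) hc0
      simpa [pushAway] using hy
    · obtain ⟨s, hs, hys⟩ := Geometry.SimplicialComplex.mem_space_iff.1 hy.1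
      have hσs := hface y hy.1 h0 s hs hys
      obtain ⟨a0, az, a1, a2⟩ := bary_spec K l hl s hs y hys
      obtain ⟨b0, bz, b1, b2⟩ :=
        bary_spec K l hl s hs x (convexHull_mono (by exact_mod_cast hσs) hxσ.1)
      let w : E → ℝ := fun v => (1 - c)⁻¹ * (l y v - c * l x v)
      have w0 : ∀ v ∈ s, 0 ≤ w v := fun v _ => by
        refine mul_nonneg (inv_nonneg.2 hc1.le) ?_
        have := hmle' y hy.1 v
        nlinarith [b0 v]
      have wz : ∀ v, v ∉ s → w v = 0 := fun v hv => by simp [w, az v hv, bz v hv]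
      have w1 : ∑ v ∈ s, w v = 1 := by
        simp only [w]
        rw [← Finset.mul_sum, Finset.sum_sub_distrib, ← Finset.mul_sum, a1, b1, mul_one,
          inv_mul_cancel₀ hc1.ne']
      have w2 : ∑ v ∈ s, w v • v = pushAway x y c := by
        simp only [w, mul_smul, sub_smul]
        rw [← Finset.smul_sum, Finset.sum_sub_distrib, ← Finset.smul_sum, a2, b2, pushAway]
      have hw := hl s hs w w0 wz w1
      rw [w2] at hw
      exact ⟨⟨Geometry.SimplicialComplex.mem_space_iff.2
        ⟨s, hs, Finset.mem_convexHull'.2 ⟨w, w0, w1, w2⟩⟩, hne⟩, fun v => by rw [hw]⟩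
  have hmc' : Continuous fun y : ↥(K.space \ {x}) => m y :=
    (hmc.mono Set.diff_subset).restrict
  have hHmem : ∀ p : ↥(K.space \ {x}) × unitInterval,
      pushAway x p.1 (p.2 * m p.1) ∈ K.space \ {x} := fun p =>
    (key p.1 p.1.2 _ (mul_nonneg p.2.2.1 (hm0 _ p.1.2.1))
      (mul_le_of_le_one_left (hm0 _ p.1.2.1) p.2.2.2)).1
  have hHc : Continuous fun p : ↥(K.space \ {x}) × unitInterval =>
      pushAway x p.1 (p.2 * m p.1) := by
    have h1 : Continuous fun p : ↥(K.space \ {x}) × unitInterval => (p.2 : ℝ) * m p.1 :=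
      (continuous_subtype_val.comp continuous_snd).mul (hmc'.comp continuous_fst)
    refine ((continuous_const.sub h1).inv₀ fun p => ?_).smul
      ((continuous_subtype_val.comp continuous_fst).sub (h1.smul continuous_const))
    have := hm1 _ p.1.2
    have := mul_le_of_le_one_left (hm0 _ p.1.2.1) p.2.2.2
    exact (by linarith : (0 : ℝ) < 1 - p.2 * m p.1).ne'
  have hrmem : ∀ y : ↥(K.space \ {x}), pushAway x y (m y) ∈ K.space \ openStar K σ := by
    intro y
    obtain ⟨h1, h2⟩ := key y y.2 (m y) (hm0 _ y.2.1) le_rfl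
    refine ⟨h1.1, fun hst => ?_⟩
    simp only [openStar, Set.mem_iUnion] at hst
    obtain ⟨s, hs, hσs, hint⟩ := hst
    obtain ⟨v, hv, hvm⟩ := hmatt y
    have := bary_pos K l hl s hs _ hint v (hσs hv)
    rw [h2, hvm, sub_self, mul_zero] at this
    exact lt_irrefl _ this
  have hrc : Continuous fun y : ↥(K.space \ {x}) => pushAway x y (m y) := by
    have := hHc.comp (Continuous.prodMk_left (1 : unitInterval))
    simpa [Function.comp_def] using this
  refine ⟨⟨fun y => ⟨_, hrmem y⟩, hrc.subtype_mk _⟩, ⟨fun p => ⟨_, hHmem p⟩, hHc.subtype_mk _⟩,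
    ?_, ?_, ?_, ?_⟩
  · intro y hy
    simp [hmstar y hy, pushAway]
  · intro y
    apply Subtype.ext
    simp [pushAway]
  · intro y
    simp
  · intro y hy t
    apply Subtype.ext
    simp [hmstar y hy, pushAway]
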